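/- arXiv:quant-ph/0010040 — 4 statements merged into one kernel-verified Lean document; each statement's English description precedes it below -/
import Mathlib

section
/- Let E be an inner product space over ℂ, let x₀ ∈ E be a unit vector, let β ∈ (0, π/2) be a real number, and let ψ₀ ∈ E be a unit vector with ⟪x₀, ψ₀⟫ = sin β (a real number). Set x₀⊥ = (1/cos β) • (ψ₀ - (sin β) • x₀), so that ψ₀ = (sin β) • x₀ + (cos β) • x₀⊥, and define Q : E → E by Q = -(I_{ψ₀} ∘ I_{x₀}). Then for every natural number k, Q^k ψ₀ = sin((2k+1)β) • x₀ + cos((2k+1)β) • x₀⊥. (That is, Q acts on the real plane spanned by x₀ and x₀⊥ as rotation by the angle 2β toward x₀.) -/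
open scoped ComplexInnerProductSpace

/-- Inversion about the hyperplane orthogonal to `ψ`: `I_ψ x = x - 2⟪ψ, x⟫ • ψ`. -/
noncomputable def inversion {E : Type*} [NormedAddCommGroup E] [InnerProductSpace ℂ E]
    (ψ : E) (x : E) : E :=
  x - ((2 : ℂ) * ⟪ψ, x⟫) • ψ

/-!
On the unit circle of the real plane spanned by an orthonormal pair, the inversion along the vector
at angle `α` is the reflection `θ ↦ 2α - θ` followed by negation. As `x₀` sits at angle `π / 2` and
`ψ₀` at angle `β`, the product of the two inversions shifts `θ` by `2β - π`, and the sign in the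
definition of `Q` turns this into a shift by `2β`.
-/

section InnerProduct

variable {𝕜 E : Type*} [RCLike 𝕜] [NormedAddCommGroup E] [InnerProductSpace 𝕜 E] {x : E}

theorem inner_sub_inner_smul_eq_zero (hx : ‖x‖ = 1) (v : E) :
    inner 𝕜 x (v - inner 𝕜 x v • x) = 0 := by
  rw [inner_sub_right, inner_smul_right, inner_self_eq_one_of_norm_eq_one hx, mul_one, sub_self]

theorem norm_sub_inner_smul_sq (hx : ‖x‖ = 1) (v : E) :
    ‖v - inner 𝕜 x v • x‖ ^ 2 = ‖v‖ ^ 2 - ‖inner 𝕜 x v‖ ^ 2 := by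
  have horth : inner 𝕜 (inner 𝕜 x v • x) (v - inner 𝕜 x v • x) = 0 := by
    rw [inner_smul_left, inner_sub_inner_smul_eq_zero hx, mul_zero]
  have pythagoras := norm_add_sq_eq_norm_sq_add_norm_sq_of_inner_eq_zero _ _ horth
  rw [add_sub_cancel, norm_smul, hx, mul_one] at pythagoras
  linear_combination -pythagoras

theorem orthonormal_pair_iff {y : E} :
    Orthonormal 𝕜 ![x, y] ↔ ‖x‖ = 1 ∧ ‖y‖ = 1 ∧ inner 𝕜 x y = 0 := by
  simp [orthonormal_vecCons_iff, and_comm]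

end InnerProduct

section Inversion

variable {E : Type*} [NormedAddCommGroup E] [InnerProductSpace ℂ E]

theorem inversion_neg (ψ v : E) : inversion ψ (-v) = -inversion ψ v := by
  simp only [inversion, inner_neg_right]
  module

/-- The vector at angle `θ` on the unit circle of the real plane spanned by an orthonormal pair
`x`, `y`. Angles are measured from `y` towards `x`, so `x` itself is at angle `π / 2`. -/
noncomputable def circleVector (x y : E) (θ : ℝ) : E :=
  (Real.sin θ : ℂ) • x + (Real.cos θ : ℂ) • y

section CircleVector

variable (x y : E)

theorem circleVector_pi_div_two : circleVector x y (Real.pi / 2) = x := by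
  simp [circleVector]

theorem circleVector_sub_pi (θ : ℝ) :
    circleVector x y (θ - Real.pi) = -circleVector x y θ := by
  simp only [circleVector, Real.sin_sub_pi, Real.cos_sub_pi, Complex.ofReal_neg]
  module

theorem circleVector_add_circleVector_two_mul_sub (α θ : ℝ) :
    circleVector x y θ + circleVector x y (2 * α - θ) =
      (2 * (Real.cos (θ - α) : ℂ)) • circleVector x y α := by
  have hsin : Real.sin θ + Real.sin (2 * α - θ) = 2 * Real.cos (θ - α) * Real.sin α := by
    rw [Real.sin_add_sin]
    ring_nf
  have hcos : Real.cos θ + Real.cos (2 * α - θ) = 2 * Real.cos (θ - α) * Real.cos α := by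
    rw [Real.cos_add_cos]
    ring_nf
  calc circleVector x y θ + circleVector x y (2 * α - θ)
      = ((Real.sin θ + Real.sin (2 * α - θ) : ℝ) : ℂ) • x +
          ((Real.cos θ + Real.cos (2 * α - θ) : ℝ) : ℂ) • y := by
        simp only [circleVector, Complex.ofReal_add]
        module
    _ = (2 * (Real.cos (θ - α) : ℂ)) • circleVector x y α := by
        simp only [hsin, hcos, circleVector, Complex.ofReal_mul, Complex.ofReal_ofNat]
        module

variable {x y}

theorem inner_circleVector (hxy : Orthonormal ℂ ![x, y]) (α θ : ℝ) :
    ⟪circleVector x y α, circleVector x y θ⟫ = (Real.cos (θ - α) : ℂ) := by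
  obtain ⟨hx, hy, hxy₀⟩ := orthonormal_pair_iff.1 hxy
  simp only [circleVector, inner_add_left, inner_add_right, inner_smul_left, inner_smul_right,
    inner_self_eq_one_of_norm_eq_one hx, inner_self_eq_one_of_norm_eq_one hy, hxy₀,
    inner_eq_zero_symm.1 hxy₀, Complex.conj_ofReal, Real.cos_sub, Complex.ofReal_add,
    Complex.ofReal_mul]
  ring

theorem inversion_circleVector (hxy : Orthonormal ℂ ![x, y]) (α θ : ℝ) :
    inversion (circleVector x y α) (circleVector x y θ) = -circleVector x y (2 * α - θ) := by
  rw [inversion, inner_circleVector hxy, ← circleVector_add_circleVector_two_mul_sub,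
    sub_add_cancel_left]

theorem neg_inversion_inversion_circleVector (hxy : Orthonormal ℂ ![x, y]) (β θ : ℝ) :
    -inversion (circleVector x y β) (inversion x (circleVector x y θ)) =
      circleVector x y (θ + 2 * β) := by
  have hinv_x : inversion x (circleVector x y θ) = -circleVector x y (Real.pi - θ) := by
    simpa only [circleVector_pi_div_two, mul_div_cancel₀ Real.pi two_ne_zero]
      using inversion_circleVector hxy (Real.pi / 2) θ
  calc -inversion (circleVector x y β) (inversion x (circleVector x y θ))
      = -circleVector x y (2 * β - (Real.pi - θ)) := by
        rw [hinv_x, inversion_neg, inversion_circleVector hxy, neg_neg]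
    _ = -circleVector x y (θ + 2 * β - Real.pi) := by ring_nf
    _ = circleVector x y (θ + 2 * β) := by rw [circleVector_sub_pi, neg_neg]

theorem iterate_neg_inversion_inversion_circleVector (hxy : Orthonormal ℂ ![x, y]) {β : ℝ}
    {Q : E → E} (hQ : ∀ v, Q v = -inversion (circleVector x y β) (inversion x v)) (k : ℕ) (θ : ℝ) :
    Q^[k] (circleVector x y θ) = circleVector x y (θ + k * (2 * β)) := by
  have hsemiconj : Function.Semiconj (circleVector x y) (· + 2 * β) Q := fun θ ↦ by
    rw [hQ, neg_inversion_inversion_circleVector hxy]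
  rw [← (hsemiconj.iterate_right k).eq, add_right_iterate_apply, nsmul_eq_mul]

end CircleVector

section Decomposition

variable {x ψ : E} {β : ℝ}

theorem orthonormal_pair_of_inner_eq_sin (hx : ‖x‖ = 1) (hψ : ‖ψ‖ = 1) (hβ : Real.cos β ≠ 0)
    (hinner : ⟪x, ψ⟫ = (Real.sin β : ℂ)) :
    Orthonormal ℂ ![x, ((1 / Real.cos β : ℝ) : ℂ) • (ψ - (Real.sin β : ℂ) • x)] := by
  have hperp : ⟪x, ψ - (Real.sin β : ℂ) • x⟫ = 0 := hinner ▸ inner_sub_inner_smul_eq_zero hx ψ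
  have hnorm : ‖ψ - (Real.sin β : ℂ) • x‖ = |Real.cos β| := by
    rw [← sq_eq_sq₀ (norm_nonneg _) (abs_nonneg _), ← hinner, norm_sub_inner_smul_sq hx, hinner,
      hψ, Complex.norm_real, Real.norm_eq_abs, sq_abs, sq_abs, Real.cos_sq', one_pow]
  have hunit : ‖((1 / Real.cos β : ℝ) : ℂ) • (ψ - (Real.sin β : ℂ) • x)‖ = 1 := by
    rw [norm_smul, hnorm, Complex.norm_real, Real.norm_eq_abs, ← abs_mul,
      one_div_mul_cancel hβ, abs_one]
  exact orthonormal_pair_iff.2 ⟨hx, hunit, by rw [inner_smul_right, hperp, mul_zero]⟩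

theorem circleVector_smul_sub_smul (x ψ : E) (hβ : Real.cos β ≠ 0) :
    circleVector x (((1 / Real.cos β : ℝ) : ℂ) • (ψ - (Real.sin β : ℂ) • x)) β = ψ := by
  rw [circleVector, smul_smul, ← Complex.ofReal_mul, mul_one_div_cancel hβ, Complex.ofReal_one,
    one_smul, add_sub_cancel]

end Decomposition

theorem grover_iterate_rotation_general {x y ψ : E} {β : ℝ} (hxy : Orthonormal ℂ ![x, y])
    (hψ : circleVector x y β = ψ) {Q : E → E} (hQ : ∀ v, Q v = -inversion ψ (inversion x v))
    (k : ℕ) : Q^[k] ψ = circleVector x y ((2 * k + 1) * β) := by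
  subst hψ
  rw [iterate_neg_inversion_inversion_circleVector hxy hQ]
  ring_nf

end Inversion

theorem grover_iterate_rotation {E : Type*} [NormedAddCommGroup E] [InnerProductSpace ℂ E]
    (x₀ ψ₀ x₀perp : E) (β : ℝ)
    (hx₀ : ‖x₀‖ = 1) (hψ₀ : ‖ψ₀‖ = 1)
    (hβ : β ∈ Set.Ioo 0 (Real.pi / 2))
    (hinner : ⟪x₀, ψ₀⟫ = (Real.sin β : ℂ))
    (hx₀perp : x₀perp = ((1 / Real.cos β : ℝ) : ℂ) • (ψ₀ - ((Real.sin β : ℝ) : ℂ) • x₀))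
    (Q : E → E) (hQ : ∀ v, Q v = -(inversion ψ₀ (inversion x₀ v))) :
    ∀ k : ℕ, Q^[k] ψ₀ =
      ((Real.sin ((2 * k + 1) * β) : ℝ) : ℂ) • x₀ +
      ((Real.cos ((2 * k + 1) * β) : ℝ) : ℂ) • x₀perp := by
  have hcos : Real.cos β ≠ 0 :=
    (Real.cos_pos_of_mem_Ioo (Set.Ioo_subset_Ioo_left (by linarith [Real.pi_pos]) hβ)).ne'
  subst hx₀perp
  exact grover_iterate_rotation_general (orthonormal_pair_of_inner_eq_sin hx₀ hψ₀ hcos hinner)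
    (circleVector_smul_sub_smul x₀ ψ₀ hcos) hQ
end

section
/- Let N ≥ 2 be a natural number, work in ℂ^N (EuclideanSpace ℂ (Fin N)), fix x₀ ∈ Fin N, let e_{x₀} be the corresponding standard basis vector, and let ψ₀ = (1/√N, …, 1/√N) be the equal superposition of all standard basis vectors. Let β = arcsin(1/√N) and define the Grover iterate Q : ℂ^N → ℂ^N by Q = -(I_{ψ₀} ∘ I_{e_{x₀}}). Then for every natural number k, the amplitude of the marked state after k iterations is ⟪e_{x₀}, Q^k ψ₀⟫ = sin((2k+1)β). -/
open scoped ComplexInnerProductSpace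

/-!
Both inversions preserve the span of the start vector `ψ` and the target vector `e`, so the pair
of amplitudes `⟪e, v⟫`, `⟪ψ, v⟫` obeys a linear recursion under the Grover iterate. When
`⟪e, ψ⟫ = c * sin β` with a phase `c`, this is the recursion satisfied by
`c * sin ((2 * k + 1) * β)` and `cos (2 * k * β)`: the iterate rotates the plane by `2 * β`.
-/

section Inversion

variable {E : Type*} [NormedAddCommGroup E] [InnerProductSpace ℂ E] {e ψ : E}

theorem inner_inversion_right (φ ψ x : E) :
    ⟪φ, inversion ψ x⟫ = ⟪φ, x⟫ - 2 * ⟪ψ, x⟫ * ⟪φ, ψ⟫ := by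
  rw [inversion, inner_sub_right, inner_smul_right]

theorem inner_inversion_self (hψ : ‖ψ‖ = 1) (x : E) : ⟪ψ, inversion ψ x⟫ = -⟪ψ, x⟫ := by
  rw [inner_inversion_right, inner_self_eq_one_of_norm_eq_one hψ]
  ring

/-- The Grover iterate `-(I_ψ ∘ I_e)` with start vector `ψ` and target vector `e`, for arbitrary
vectors of a complex inner product space. -/
noncomputable def groverIterate (e ψ : E) (v : E) : E :=
  -inversion ψ (inversion e v)

theorem inner_start_groverIterate (hψ : ‖ψ‖ = 1) (e v : E) :
    ⟪ψ, groverIterate e ψ v⟫ = ⟪ψ, v⟫ - 2 * ⟪e, v⟫ * ⟪ψ, e⟫ := by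
  rw [groverIterate, inner_neg_right, inner_inversion_self hψ, neg_neg, inner_inversion_right]

theorem inner_target_groverIterate (he : ‖e‖ = 1) (hψ : ‖ψ‖ = 1) (v : E) :
    ⟪e, groverIterate e ψ v⟫ = ⟪e, v⟫ + 2 * ⟪ψ, groverIterate e ψ v⟫ * ⟪e, ψ⟫ := by
  rw [groverIterate, inner_neg_right, inner_neg_right, inner_inversion_self hψ,
    inner_inversion_right e ψ, inner_inversion_self he]
  ring

end Inversion

section Trigonometry

theorem cos_two_mul_add_one_mul (t β : ℝ) :
    Real.cos (2 * (t + 1) * β) =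
      Real.cos (2 * t * β) - 2 * Real.sin ((2 * t + 1) * β) * Real.sin β := by
  rw [Real.two_mul_sin_mul_sin]
  ring_nf

theorem sin_two_mul_add_one_add_one_mul (t β : ℝ) :
    Real.sin ((2 * (t + 1) + 1) * β) =
      Real.sin ((2 * t + 1) * β) + 2 * Real.cos (2 * (t + 1) * β) * Real.sin β := by
  have h_add : (2 * (t + 1) + 1) * β = 2 * (t + 1) * β + β := by ring
  have h_sub : (2 * t + 1) * β = 2 * (t + 1) * β - β := by ring
  rw [h_add, h_sub, Real.sin_add, Real.sin_sub]
  ring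

theorem sin_arcsin_one_div_sqrt {x : ℝ} (hx : 1 ≤ x) :
    Real.sin (Real.arcsin (1 / √x)) = 1 / √x := by
  have h_nonneg : 0 ≤ 1 / √x := by positivity
  have h_le_one : 1 / √x ≤ 1 := div_le_one_of_le₀ (Real.one_le_sqrt.mpr hx) (Real.sqrt_nonneg x)
  exact Real.sin_arcsin (by linarith) h_le_one

end Trigonometry

section Amplification

variable {E : Type*} [NormedAddCommGroup E] [InnerProductSpace ℂ E] {e ψ : E}

theorem inner_target_and_inner_start_iterate_groverIterate (he : ‖e‖ = 1) (hψ : ‖ψ‖ = 1)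
    {c : ℂ} (hc : ‖c‖ = 1) {β : ℝ} (h_inner : ⟪e, ψ⟫ = c * Real.sin β) (k : ℕ) :
    ⟪e, (groverIterate e ψ)^[k] ψ⟫ = c * Real.sin ((2 * k + 1) * β) ∧
      ⟪ψ, (groverIterate e ψ)^[k] ψ⟫ = Real.cos (2 * k * β) := by
  have h_inner_symm : ⟪ψ, e⟫ = starRingEnd ℂ c * Real.sin β := by
    rw [← inner_conj_symm, h_inner, map_mul, Complex.conj_ofReal]
  have h_phase : c * starRingEnd ℂ c = 1 := by
    rw [Complex.mul_conj', hc, Complex.ofReal_one, one_pow]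
  induction k with
  | zero => simp [h_inner, hψ]
  | succ k ih =>
    obtain ⟨h_target, h_start⟩ := ih
    have h_start_succ :
        ⟪ψ, (groverIterate e ψ)^[k + 1] ψ⟫ = Real.cos (2 * (k + 1 : ℕ) * β) := by
      rw [Function.iterate_succ_apply', inner_start_groverIterate hψ, h_target, h_start,
        h_inner_symm, Nat.cast_succ, cos_two_mul_add_one_mul]
      push_cast
      linear_combination (-2 * Complex.sin ((2 * k + 1) * β) * Complex.sin β) * h_phase
    refine ⟨?_, h_start_succ⟩
    rw [Function.iterate_succ_apply'] at h_start_succ ⊢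
    rw [inner_target_groverIterate he hψ, h_target, h_start_succ, h_inner, Nat.cast_succ,
      sin_two_mul_add_one_add_one_mul, Complex.ofReal_add, Complex.ofReal_mul, Complex.ofReal_mul,
      Complex.ofReal_ofNat]
    ring

theorem grover_amplitude_general (he : ‖e‖ = 1) (hψ : ‖ψ‖ = 1) {c : ℂ} (hc : ‖c‖ = 1) {β : ℝ}
    (h_inner : ⟪e, ψ⟫ = c * Real.sin β) (k : ℕ) :
    ⟪e, (groverIterate e ψ)^[k] ψ⟫ = c * Real.sin ((2 * k + 1) * β) :=
  (inner_target_and_inner_start_iterate_groverIterate he hψ hc h_inner k).1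

end Amplification

theorem norm_eq_one_of_forall_norm_apply_eq {𝕜 ι : Type*} [RCLike 𝕜] [Fintype ι] [Nonempty ι]
    {ψ : EuclideanSpace 𝕜 ι} (hψ : ∀ i, ‖ψ i‖ = 1 / √(Fintype.card ι)) : ‖ψ‖ = 1 := by
  simp [EuclideanSpace.norm_eq, hψ]

theorem grover_amplitude (N : ℕ) (hN : 2 ≤ N) (x₀ : Fin N)
    (ψ₀ : EuclideanSpace ℂ (Fin N))
    (hψ₀ : ∀ i, ψ₀ i = ((1 / Real.sqrt N : ℝ) : ℂ))
    (β : ℝ) (hβ : β = Real.arcsin (1 / Real.sqrt N))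
    (Q : EuclideanSpace ℂ (Fin N) → EuclideanSpace ℂ (Fin N))
    (hQ : ∀ v, Q v = -(inversion ψ₀ (inversion (EuclideanSpace.single x₀ (1 : ℂ)) v))) :
    ∀ k : ℕ, ⟪EuclideanSpace.single x₀ (1 : ℂ), Q^[k] ψ₀⟫ =
      ((Real.sin ((2 * k + 1) * β) : ℝ) : ℂ) := by
  have hQ_eq : Q = groverIterate (EuclideanSpace.single x₀ 1) ψ₀ := funext hQ
  have h_target : ‖EuclideanSpace.single x₀ (1 : ℂ)‖ = 1 := by simp
  have : Nonempty (Fin N) := ⟨x₀⟩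
  have h_start : ‖ψ₀‖ = 1 := norm_eq_one_of_forall_norm_apply_eq fun i ↦ by simp [hψ₀]
  have h_sin : Real.sin β = 1 / √N :=
    hβ ▸ sin_arcsin_one_div_sqrt (by exact_mod_cast one_le_two.trans hN)
  have h_inner : ⟪EuclideanSpace.single x₀ (1 : ℂ), ψ₀⟫ = 1 * Real.sin β := by
    simp [EuclideanSpace.inner_single_left, hψ₀, h_sin]
  intro k
  rw [hQ_eq, grover_amplitude_general h_target h_start norm_one h_inner k, one_mul]
end

section
/- Let N ≥ 2 be a natural number, let β = arcsin(1/√N), and let K be the nearest integer to π/(4β) - 1/2 (so π/(4β) - 1 ≤ K ≤ π/(4β)). Then cos²((2K+1)β) ≤ 1/N. -/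
/-!
The odd multiples of `β` have spacing `2 |β|`, so rounding picks one within `|β|` of `π / 2`.
Since `cos x = sin (π / 2 - x)` and `|sin y|` increases with `|y|` for `|y| ≤ π / 2`, the squared
cosine at that multiple is at most `sin β ^ 2`.
-/

theorem abs_sub_two_mul_round_add_one_mul_le {𝕜 : Type*} [Field 𝕜] [LinearOrder 𝕜]
    [IsStrictOrderedRing 𝕜] [FloorRing 𝕜] (c : 𝕜) {b : 𝕜} (hb : b ≠ 0) :
    |c - (2 * round (c / (2 * b) - 1 / 2) + 1) * b| ≤ |b| := by
  set t := c / (2 * b) - 1 / 2 with ht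
  have c_sub_eq : c - (2 * round t + 1) * b = (t - round t) * (2 * b) := by
    rw [ht]
    field_simp
    ring
  calc |c - (2 * round t + 1) * b|
      = |t - round t| * (2 * |b|) := by rw [c_sub_eq, abs_mul, abs_mul, abs_two]
    _ ≤ 1 / 2 * (2 * |b|) := by gcongr; exact abs_sub_round t
    _ = |b| := by ring

theorem abs_sin_le_abs_sin_of_abs_le_pi_div_two {x y : ℝ} (hxy : |x| ≤ |y|)
    (hy : |y| ≤ Real.pi / 2) : |Real.sin x| ≤ |Real.sin y| := by
  have abs_y_le_pi : |y| ≤ Real.pi := hy.trans (half_le_self Real.pi_pos.le)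
  rw [Real.abs_sin_eq_sin_abs_of_abs_le_pi (hxy.trans abs_y_le_pi),
    Real.abs_sin_eq_sin_abs_of_abs_le_pi abs_y_le_pi]
  exact Real.sin_le_sin_of_le_of_le_pi_div_two (by linarith [abs_nonneg x, Real.pi_pos]) hy hxy

theorem cos_sq_two_mul_round_add_one_mul_le_sin_sq {β : ℝ} (hβ : β ≠ 0)
    (hβ_le : |β| ≤ Real.pi / 2) :
    Real.cos ((2 * round (Real.pi / (4 * β) - 1 / 2) + 1) * β) ^ 2 ≤ Real.sin β ^ 2 := by
  have pi_div_eq : Real.pi / (4 * β) = Real.pi / 2 / (2 * β) := by ring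
  rw [pi_div_eq, ← Real.sin_pi_div_two_sub]
  exact sq_le_sq.mpr (abs_sin_le_abs_sin_of_abs_le_pi_div_two
    (abs_sub_two_mul_round_add_one_mul_le (Real.pi / 2) hβ) hβ_le)

theorem grover_round_error_bound_general (a : ℝ) (ha : a ≠ 0) (ha_le : |a| ≤ 1) (β : ℝ)
    (hβ : β = Real.arcsin a) (K : ℤ) (hK : K = round (Real.pi / (4 * β) - 1 / 2)) :
    Real.cos ((2 * K + 1) * β) ^ 2 ≤ a ^ 2 := by
  have β_ne_zero : β ≠ 0 := by rwa [hβ, Ne, Real.arcsin_eq_zero_iff]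
  have abs_β_le : |β| ≤ Real.pi / 2 := by
    rw [hβ]
    exact abs_le.mpr (Real.arcsin_mem_Icc a)
  have sin_β : Real.sin β = a := by
    rw [hβ, Real.sin_arcsin (abs_le.mp ha_le).1 (abs_le.mp ha_le).2]
  rw [hK]
  simpa only [sin_β] using cos_sq_two_mul_round_add_one_mul_le_sin_sq β_ne_zero abs_β_le

theorem grover_round_error_bound (N : ℕ) (hN : 2 ≤ N) (β : ℝ)
    (hβ : β = Real.arcsin (1 / Real.sqrt N))
    (K : ℤ) (hK : K = round (Real.pi / (4 * β) - 1 / 2)) :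
    Real.cos ((2 * K + 1) * β) ^ 2 ≤ 1 / N := by
  have one_le_sqrt : 1 ≤ Real.sqrt N := Real.one_le_sqrt.mpr (by exact_mod_cast one_le_two.trans hN)
  simpa only [div_pow, one_pow, Real.sq_sqrt N.cast_nonneg] using
    grover_round_error_bound_general (1 / Real.sqrt N) (by positivity)
      (by simpa [abs_of_nonneg] using inv_le_one_of_one_le₀ one_le_sqrt) β hβ K hK
end

section
/- Let N ≥ 2 be a natural number, let β = arcsin(1/√N), and let K = ⌊π/(4β) - 1/2⌋ be the floor of π/(4β) - 1/2. Then cos²((2K+1)β) ≤ 4/N - 4/N². -/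
/-!
Each Grover iteration rotates the state by `2 * β`, and `K` is the last iteration at which its angle
`(2 * K + 1) * β` has not passed `π / 2`. The remaining gap to `π / 2` is therefore smaller than
`2 * β`, and it is also at most `π - 2 * β`, so the failure amplitude, which is the sine of the gap,
is at most `sin (2 * β)`. Finally `sin (2 * β) ^ 2 = 4 / N - 4 / N ^ 2` because `sin β ^ 2 = 1 / N`.
-/

open Real

theorem sin_le_sin_of_le_of_add_le_pi {x y : ℝ} (hx : -(π / 2) ≤ x) (hxy : x ≤ y)
    (hadd : x + y ≤ π) : sin x ≤ sin y := by
  have hsin : 0 ≤ sin ((y - x) / 2) :=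
    sin_nonneg_of_nonneg_of_le_pi (by linarith) (by linarith)
  have hcos : 0 ≤ cos ((y + x) / 2) := cos_nonneg_of_mem_Icc ⟨by linarith, by linarith⟩
  rw [← sub_nonneg, sin_sub_sin]
  positivity

theorem sin_two_mul_arcsin_sq {x : ℝ} (hx₁ : -1 ≤ x) (hx₂ : x ≤ 1) :
    sin (2 * arcsin x) ^ 2 = 4 * x ^ 2 * (1 - x ^ 2) := by
  rw [sin_two_mul, mul_pow, mul_pow, cos_sq', sin_arcsin hx₁ hx₂]
  ring

/-- The number of Grover iterations for the initial angle `β` between the uniform superposition and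
the unmarked states: the largest integer `k` with `(2 * k + 1) * β ≤ π / 2`, for `0 < β`. It is an
integer, and can be negative when `π / 2 < β`. -/
noncomputable def groverIterations (β : ℝ) : ℤ := ⌊π / (4 * β) - 1 / 2⌋

section groverIterations

variable {β : ℝ}

theorem le_groverIterations_iff (hβ : 0 < β) {k : ℤ} :
    k ≤ groverIterations β ↔ (2 * k + 1) * β ≤ π / 2 := by
  rw [groverIterations, Int.le_floor, le_sub_iff_add_le, le_div_iff₀ (by positivity)]
  constructor <;> intro h <;> linarith

theorem groverIterations_nonneg (hβ : 0 < β) (hβ' : β ≤ π / 2) : 0 ≤ groverIterations β := by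
  rw [le_groverIterations_iff hβ]
  simpa using hβ'

theorem groverIterations_angle_le (hβ : 0 < β) :
    (2 * groverIterations β + 1) * β ≤ π / 2 :=
  (le_groverIterations_iff hβ).mp le_rfl

theorem pi_div_two_sub_groverIterations_angle_lt (hβ : 0 < β) :
    π / 2 - (2 * groverIterations β + 1) * β < 2 * β := by
  have hnext : ¬groverIterations β + 1 ≤ groverIterations β := by simp
  rw [le_groverIterations_iff hβ] at hnext
  push_cast at hnext
  linarith

theorem pi_div_two_sub_groverIterations_angle_le (hβ : 0 < β) (hβ' : β ≤ π / 2) :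
    π / 2 - (2 * groverIterations β + 1) * β ≤ π - 2 * β := by
  have hK : (0 : ℝ) ≤ groverIterations β := mod_cast groverIterations_nonneg hβ hβ'
  have hKβ : 0 ≤ groverIterations β * β := by positivity
  linarith

theorem cos_groverIterations_angle_sq_le (hβ : 0 < β) (hβ' : β ≤ π / 2) :
    cos ((2 * groverIterations β + 1) * β) ^ 2 ≤ sin (2 * β) ^ 2 := by
  have hgap_nonneg := sub_nonneg.mpr (groverIterations_angle_le hβ)
  have hgap_lt := pi_div_two_sub_groverIterations_angle_lt hβ
  have hgap_le := pi_div_two_sub_groverIterations_angle_le hβ hβ'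
  rw [← sin_pi_div_two_sub]
  refine pow_le_pow_left₀ (sin_nonneg_of_nonneg_of_le_pi hgap_nonneg (by linarith)) ?_ 2
  exact sin_le_sin_of_le_of_add_le_pi (by linarith) hgap_lt.le (by linarith)

end groverIterations

theorem grover_floor_error_bound_general (N : ℝ) (hN : 1 ≤ N) (β : ℝ)
    (hβ : β = arcsin (1 / √N)) (K : ℤ) (hK : K = ⌊π / (4 * β) - 1 / 2⌋) :
    cos ((2 * K + 1) * β) ^ 2 ≤ 4 / N - 4 / N ^ 2 := by
  have hN₀ : 0 < N := by linarith
  have hx₀ : 0 < 1 / √N := by positivity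
  have hx₁ : 1 / √N ≤ 1 := div_le_one_of_le₀ (one_le_sqrt.mpr hN) (sqrt_nonneg N)
  have hβ₀ : 0 < β := hβ ▸ arcsin_pos.mpr hx₀
  have hβ₁ : β ≤ π / 2 := hβ ▸ arcsin_le_pi_div_two _
  calc cos ((2 * K + 1) * β) ^ 2
      ≤ sin (2 * β) ^ 2 := hK ▸ cos_groverIterations_angle_sq_le hβ₀ hβ₁
    _ = 4 * (1 / √N) ^ 2 * (1 - (1 / √N) ^ 2) := by
      rw [hβ, sin_two_mul_arcsin_sq (by linarith) hx₁]
    _ = 4 / N - 4 / N ^ 2 := by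
      rw [div_pow, sq_sqrt hN₀.le]
      ring

theorem grover_floor_error_bound (N : ℕ) (hN : 2 ≤ N) (β : ℝ)
    (hβ : β = Real.arcsin (1 / Real.sqrt N))
    (K : ℤ) (hK : K = ⌊Real.pi / (4 * β) - 1 / 2⌋) :
    Real.cos ((2 * K + 1) * β) ^ 2 ≤ 4 / N - 4 / (N : ℝ) ^ 2 :=
  grover_floor_error_bound_general N (mod_cast one_le_two.trans hN) β hβ K hK
end
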